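/- Let F be a finite field of odd characteristic, ψ nontrivial additive character, χ nontrivial multiplicative character, ε a nonsquare, x = [[0,1],[ε,0]], and a,b ∈ Fˣ with χ(a) ≠ χ(b). Define h := δ_{ax} − δ_{bx} on sl₂(F). Then the Fourier transform ĥ(y) = ψ(tr(axy)) − ψ(tr(bxy)) satisfies ĥ(0) = 0 and ∑_{u ∈ Fˣ} ĥ(z_u) χ(u⁻¹) ≠ 0, where z_u = [[0,0],[u,0]]. -/

import Mathlib

/-!
For a matrix `x` with `d = x j i ≠ 0` and `z_u = u E_{ij}` one has `tr(c x z_u) = c d u`, so the sum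
in question only involves the additive character on the line through `E_{ij}`. Substituting
`u ↦ (c d)⁻¹ u` turns `∑ u, ψ(c d u) χ(u⁻¹)` into `χ(c d)` times the Gauss sum `Δ` of `χ⁻¹` and `ψ`.
The difference for `c = a` and `c = b` is therefore `(χ(a) - χ(b)) χ(d) Δ`, and `Δ ≠ 0`.
-/

theorem fin_two_lowerLeft_eq_single {α : Type*} [Zero α] (u : α) :
    !![0, 0; u, 0] = Matrix.single (1 : Fin 2) (0 : Fin 2) u := by
  ext i j
  fin_cases i <;> fin_cases j <;> rfl

section GaussSum

variable {R R' : Type*} [CommRing R] [Fintype R] [DecidableEq R] [CommRing R']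

theorem gaussSum_eq_sum_units (χ : MulChar R R') (ψ : AddChar R R') :
    gaussSum χ ψ = ∑ u : Rˣ, χ u * ψ u := by
  refine (Finset.sum_of_injOn _ Units.val_injective.injOn (by simp) (fun r _ hr ↦ ?_)
    fun _ _ ↦ rfl).symm
  have hr_nonunit : ¬IsUnit r := by simpa [IsUnit] using hr
  rw [χ.map_nonunit hr_nonunit, zero_mul]

theorem sum_units_addChar_mul_left (ψ : AddChar R R') (χ : Rˣ →* R'ˣ) (c : Rˣ) :
    ∑ u : Rˣ, ψ (c * u) * (χ u⁻¹ : R') = χ c * gaussSum (MulChar.ofUnitHom χ)⁻¹ ψ :=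
  calc ∑ u : Rˣ, ψ (c * u) * (χ u⁻¹ : R')
    _ = gaussSum (MulChar.ofUnitHom χ)⁻¹ (ψ.mulShift c) := by
      simp [gaussSum_eq_sum_units, MulChar.inv_apply, AddChar.mulShift_apply, mul_comm]
    _ = χ c * gaussSum (MulChar.ofUnitHom χ)⁻¹ ψ := by
      rw [gaussSum_mulShift_eq, inv_inv, MulChar.ofUnitHom_coe]

theorem sum_units_addChar_sub_mul (ψ : AddChar R R') (χ : Rˣ →* R'ˣ) (a b : Rˣ) :
    ∑ u : Rˣ, (ψ (a * u) - ψ (b * u)) * (χ u⁻¹ : R') =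
      (χ a - χ b) * gaussSum (MulChar.ofUnitHom χ)⁻¹ ψ := by
  simp only [sub_mul, Finset.sum_sub_distrib, sum_units_addChar_mul_left]

end GaussSum

section FiniteField

variable {F R' : Type*} [Field F] [Fintype F] [CommRing R'] [IsDomain R']

theorem natCast_card_ne_zero_of_addChar_ne_one {ψ : AddChar F R'} (hψ : ψ ≠ 1) :
    (Fintype.card F : R') ≠ 0 := by
  obtain ⟨p, hp⟩ := CharP.exists F
  obtain ⟨n, hp_prime, hcard⟩ := FiniteField.card F p
  have : Fact p.Prime := ⟨hp_prime⟩
  contrapose! hψ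
  have : CharP R' p := by
    rw [CharP.charP_iff_prime_eq_zero hp_prime]
    simpa [hcard] using hψ
  ext t
  -- A domain of characteristic `p` has no nontrivial `p`-th roots of unity.
  refine frobenius_inj R' p ?_
  calc ψ t ^ p
    _ = ψ (p • t) := (ψ.map_nsmul_eq_pow p t).symm
    _ = 1 := by rw [nsmul_eq_mul, CharP.cast_eq_zero, zero_mul, ψ.map_zero_eq_one]
    _ = (1 : AddChar F R') t ^ p := by simp

theorem gaussSum_ne_zero_of_ne_one {χ : MulChar F R'} (hχ : χ ≠ 1) {ψ : AddChar F R'}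
    (hψ : ψ ≠ 1) : gaussSum χ ψ ≠ 0 :=
  gaussSum_ne_zero_of_nontrivial (natCast_card_ne_zero_of_addChar_ne_one hψ) hχ
    (AddChar.IsPrimitive.of_ne_one hψ)

variable [DecidableEq F]

theorem sum_units_addChar_sub_mul_ne_zero {ψ : AddChar F R'} (hψ : ψ ≠ 1) {χ : Fˣ →* R'ˣ}
    {a b : Fˣ} (hab : χ a ≠ χ b) :
    ∑ u : Fˣ, (ψ (a * u) - ψ (b * u)) * (χ u⁻¹ : R') ≠ 0 := by
  have hχ : MulChar.ofUnitHom χ ≠ 1 := by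
    contrapose! hab with hχ
    rw [Units.ext_iff, ← MulChar.ofUnitHom_coe, ← MulChar.ofUnitHom_coe, hχ,
      MulChar.one_apply_coe, MulChar.one_apply_coe]
  rw [sum_units_addChar_sub_mul]
  exact mul_ne_zero (sub_ne_zero.mpr (Units.val_injective.ne hab))
    (gaussSum_ne_zero_of_ne_one (inv_ne_one.mpr hχ) hψ)

theorem elliptic_test_function_general {n : Type*} [Fintype n] [DecidableEq n]
    {ψ : AddChar F R'} (hψ : ψ ≠ 1) {χ : Fˣ →* R'ˣ} {x : Matrix n n F} {i j : n} (hx : x j i ≠ 0)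
    {a b : Fˣ} (hab : χ a ≠ χ b) :
    ψ (((a : F) • x) * 0).trace - ψ (((b : F) • x) * 0).trace = 0 ∧
      ∑ u : Fˣ, (ψ (((a : F) • x) * Matrix.single i j (u : F)).trace
        - ψ (((b : F) • x) * Matrix.single i j (u : F)).trace) * (χ u⁻¹ : R') ≠ 0 := by
  refine ⟨by simp, ?_⟩
  have hd : χ (a * Units.mk0 _ hx) ≠ χ (b * Units.mk0 _ hx) := by simpa using hab
  simpa [Matrix.trace_mul_single, mul_assoc] using sum_units_addChar_sub_mul_ne_zero hψ hd

end FiniteField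

/-- For `h = δ_{ax} − δ_{bx}` with `χ(a) ≠ χ(b)`, the Fourier transform
`ĥ(y) = ψ(tr(axy)) − ψ(tr(bxy))` satisfies `ĥ(0) = 0` and
`∑_{u ∈ Fˣ} ĥ(z_u) χ(u⁻¹) ≠ 0`. -/
theorem elliptic_test_function (F : Type*) [Field F] [Fintype F] [DecidableEq F]
    (hchar : ringChar F ≠ 2)
    (ψ : AddChar F ℂ) (hψ : ψ ≠ 1)
    (χ : Fˣ →* ℂˣ) (hχ : χ ≠ 1)
    (ε : F) (hε : ¬ IsSquare ε)
    (a b : Fˣ) (hab : χ a ≠ χ b) :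
    (ψ ((((a : F) • !![0, 1; ε, 0] : Matrix (Fin 2) (Fin 2) F) * 0).trace)
      - ψ ((((b : F) • !![0, 1; ε, 0] : Matrix (Fin 2) (Fin 2) F) * 0).trace) = 0) ∧
    (∑ u : Fˣ,
        (ψ ((((a : F) • !![0, 1; ε, 0] : Matrix (Fin 2) (Fin 2) F) * !![0, 0; (u : F), 0]).trace)
          - ψ ((((b : F) • !![0, 1; ε, 0] : Matrix (Fin 2) (Fin 2) F) * !![0, 0; (u : F), 0]).trace))
        * ((χ u⁻¹ : ℂˣ) : ℂ)) ≠ 0 := by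
  simp only [fin_two_lowerLeft_eq_single]
  exact elliptic_test_function_general hψ (by simp) hab
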